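/- arXiv:math/0002227 — 2 statements merged into one kernel-verified Lean document; each statement's English description precedes it below -/
import Mathlib

section
/- Define sequences of triples of real numbers by α₀⁽¹⁾ = 2^(1/4), α₀⁽²⁾ = 2^(1/2), α₀⁽³⁾ = 2^(3/4), and for each i, with aᵢ⁽ᵏ⁾ = ⌊αᵢ⁽ᵏ⁾⌋, set αᵢ₊₁⁽¹⁾ = 1/(αᵢ⁽³⁾ − aᵢ⁽³⁾), αᵢ₊₁⁽²⁾ = (αᵢ⁽¹⁾ − aᵢ⁽¹⁾)/(αᵢ⁽³⁾ − aᵢ⁽³⁾), αᵢ₊₁⁽³⁾ = (αᵢ⁽²⁾ − aᵢ⁽²⁾)/(αᵢ⁽³⁾ − aᵢ⁽³⁾). Then the integer sequences are eventually periodic with period 3: a₀⁽¹⁾ = a₀⁽²⁾ = a₀⁽³⁾ = 1, and for all i ≥ 1, aᵢ⁽¹⁾ = 2 if 3 divides i and aᵢ⁽¹⁾ = 1 otherwise, while aᵢ⁽²⁾ = aᵢ⁽³⁾ = 1 if 3 divides i and 0 otherwise. -/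
noncomputable def bcfStep (p : ℝ × ℝ × ℝ) : ℝ × ℝ × ℝ :=
  (1 / (p.2.2 - ⌊p.2.2⌋),
   (p.1 - ⌊p.1⌋) / (p.2.2 - ⌊p.2.2⌋),
   (p.2.1 - ⌊p.2.1⌋) / (p.2.2 - ⌊p.2.2⌋))

noncomputable def bcfSeq : ℕ → ℝ × ℝ × ℝ
  | 0 => ((2 : ℝ) ^ ((1 : ℝ) / 4), (2 : ℝ) ^ ((1 : ℝ) / 2), (2 : ℝ) ^ ((3 : ℝ) / 4))
  | i + 1 => bcfStep (bcfSeq i)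

/-!
Let `t` be the positive fourth root of `2`. After the initial triple `(t, t², t³)`, the algorithm
produces

* `(1 + t³ / (1 + t + t²), 1 / (1 + t + t²), (1 + t) / (1 + t + t²))`,
* `(1 + t² / (1 + t), t³ / (1 + t), 1 / (1 + t))`,
* `(1 + t, t², t³)`,

and all integer parts can be read off from `1 < t` and `t³ < 2`. The third of these triples differs
from the initial one by `(1, 0, 0)`, and a step of the algorithm only sees fractional parts, so
these three triples repeat forever. Algebraically, the equation `t⁴ = 2` enters only in the
first step, through `(t³ - 1) (1 + t + t² + t³) = 1 + t + t²`.
-/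

lemma floor_pow_eq_one {R : Type*} [Ring R] [LinearOrder R] [IsStrictOrderedRing R] [FloorRing R]
    {t : R} {n k : ℕ} (ht : 1 ≤ t) (hn : t ^ n < 2) (hk : k ≤ n) : ⌊t ^ k⌋ = 1 := by
  rw [Int.floor_eq_iff, Int.cast_one, one_add_one_eq_two]
  exact ⟨one_le_pow₀ ht, (pow_le_pow_right₀ ht hk).trans_lt hn⟩

lemma floor_div_eq_zero {K : Type*} [Field K] [LinearOrder K] [IsStrictOrderedRing K] [FloorRing K]
    {x y : K} (hx : 0 ≤ x) (hxy : x < y) : ⌊x / y⌋ = 0 := by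
  have hy : 0 < y := hx.trans_lt hxy
  exact Int.floor_eq_zero_iff.mpr ⟨div_nonneg hx hy.le, (div_lt_one hy).mpr hxy⟩

/-- The integer parts `(a⁽¹⁾, a⁽²⁾, a⁽³⁾)` of a triple of complete quotients. -/
noncomputable def bcfIntPart (p : ℝ × ℝ × ℝ) : ℤ × ℤ × ℤ :=
  (⌊p.1⌋, ⌊p.2.1⌋, ⌊p.2.2⌋)

lemma bcfIntPart_eq_iff {x y z : ℝ} {a b c : ℤ} :
    bcfIntPart (x, y, z) = (a, b, c) ↔ ⌊x⌋ = a ∧ ⌊y⌋ = b ∧ ⌊z⌋ = c := by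
  simp only [bcfIntPart, Prod.mk.injEq]

lemma bcfStep_of_bcfIntPart_eq {x y z : ℝ} {a b c : ℤ} (h : bcfIntPart (x, y, z) = (a, b, c)) :
    bcfStep (x, y, z) = (1 / (z - c), (x - a) / (z - c), (y - b) / (z - c)) := by
  obtain ⟨hx, hy, hz⟩ := bcfIntPart_eq_iff.mp h
  simp only [bcfStep, hx, hy, hz]

lemma bcfStep_intCast_add (a b c : ℤ) (x y z : ℝ) :
    bcfStep (a + x, b + y, c + z) = bcfStep (x, y, z) := by
  simp only [bcfStep, Int.self_sub_floor, Int.fract_intCast_add]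

section Orbit

variable {t : ℝ}

lemma bcfIntPart_pow (ht : 1 ≤ t) (ht3 : t ^ 3 < 2) : bcfIntPart (t, t ^ 2, t ^ 3) = (1, 1, 1) :=
  bcfIntPart_eq_iff.mpr
    ⟨by simpa only [pow_one] using floor_pow_eq_one ht ht3 (show 1 ≤ 3 by norm_num),
      floor_pow_eq_one ht ht3 (by norm_num), floor_pow_eq_one ht ht3 le_rfl⟩

lemma bcfIntPart_one_add_pow (ht : 1 ≤ t) (ht3 : t ^ 3 < 2) :
    bcfIntPart (1 + t, t ^ 2, t ^ 3) = (2, 1, 1) := by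
  obtain ⟨h1, h2, h3⟩ := bcfIntPart_eq_iff.mp (bcfIntPart_pow ht ht3)
  exact bcfIntPart_eq_iff.mpr ⟨by rw [add_comm, Int.floor_add_one, h1, one_add_one_eq_two], h2, h3⟩

lemma bcfIntPart_div_one_add_add_sq (ht : 0 < t) (ht3 : t ^ 3 < 1 + t + t ^ 2) :
    bcfIntPart (1 + t ^ 3 / (1 + t + t ^ 2), 1 / (1 + t + t ^ 2), (1 + t) / (1 + t + t ^ 2)) =
      (1, 0, 0) := by
  have hsq : 0 < t ^ 2 := by positivity
  refine bcfIntPart_eq_iff.mpr ⟨?_, ?_, ?_⟩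
  · rw [add_comm, Int.floor_add_one, floor_div_eq_zero (by positivity) ht3, zero_add]
  · exact floor_div_eq_zero zero_le_one (by linarith)
  · exact floor_div_eq_zero (by positivity) (by linarith)

lemma bcfIntPart_div_one_add (ht : 0 < t) (ht2 : t ^ 2 < 1 + t) (ht3 : t ^ 3 < 1 + t) :
    bcfIntPart (1 + t ^ 2 / (1 + t), t ^ 3 / (1 + t), 1 / (1 + t)) = (1, 0, 0) := by
  refine bcfIntPart_eq_iff.mpr ⟨?_, ?_, ?_⟩
  · rw [add_comm, Int.floor_add_one, floor_div_eq_zero (by positivity) ht2, zero_add]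
  · exact floor_div_eq_zero (by positivity) ht3
  · exact floor_div_eq_zero zero_le_one (by linarith)

lemma bcfStep_pow (ht : 1 < t) (ht4 : t ^ 4 = 2) :
    bcfStep (t, t ^ 2, t ^ 3) =
      (1 + t ^ 3 / (1 + t + t ^ 2), 1 / (1 + t + t ^ 2), (1 + t) / (1 + t + t ^ 2)) := by
  have ht3 : t ^ 3 < 2 := (pow_lt_pow_right₀ ht (by norm_num)).trans_eq ht4
  have hcube : t ^ 3 - 1 ≠ 0 := (sub_pos.mpr (one_lt_pow₀ ht three_ne_zero)).ne'
  have hsum : 1 + t + t ^ 2 ≠ 0 := by positivity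
  have hfactor : (t ^ 3 - 1) * (1 + t + t ^ 2 + t ^ 3) = 1 + t + t ^ 2 := by
    linear_combination (1 + t + t ^ 2) * ht4
  rw [bcfStep_of_bcfIntPart_eq (bcfIntPart_pow ht.le ht3), Int.cast_one]
  refine Prod.ext ?_ (Prod.ext ?_ ?_)
  · rw [one_add_div hsum, div_eq_div_iff hcube hsum]
    linear_combination -hfactor
  · rw [div_eq_div_iff hcube hsum]
    ring
  · rw [div_eq_div_iff hcube hsum]
    ring

lemma bcfStep_div_one_add_add_sq (ht : 0 < t) (ht3 : t ^ 3 < 1 + t + t ^ 2) :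
    bcfStep (1 + t ^ 3 / (1 + t + t ^ 2), 1 / (1 + t + t ^ 2), (1 + t) / (1 + t + t ^ 2)) =
      (1 + t ^ 2 / (1 + t), t ^ 3 / (1 + t), 1 / (1 + t)) := by
  have hsum : 1 + t + t ^ 2 ≠ 0 := by positivity
  have hadd : 1 + t ≠ 0 := by positivity
  rw [bcfStep_of_bcfIntPart_eq (bcfIntPart_div_one_add_add_sq ht ht3), Int.cast_one, Int.cast_zero,
    add_sub_cancel_left, sub_zero, sub_zero, div_div_div_cancel_right₀ hsum,
    div_div_div_cancel_right₀ hsum, one_div_div, add_div, div_self hadd]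

lemma bcfStep_div_one_add (ht : 0 < t) (ht2 : t ^ 2 < 1 + t) (ht3 : t ^ 3 < 1 + t) :
    bcfStep (1 + t ^ 2 / (1 + t), t ^ 3 / (1 + t), 1 / (1 + t)) = (1 + t, t ^ 2, t ^ 3) := by
  have hadd : 1 + t ≠ 0 := by positivity
  rw [bcfStep_of_bcfIntPart_eq (bcfIntPart_div_one_add ht ht2 ht3), Int.cast_one, Int.cast_zero,
    add_sub_cancel_left, sub_zero, sub_zero, div_div_div_cancel_right₀ hadd,
    div_div_div_cancel_right₀ hadd, one_div_one_div, div_one, div_one]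

end Orbit

/-- The positive fourth root of `2`, whose first three powers start the sequence `bcfSeq`. -/
noncomputable def fourthRootTwo : ℝ :=
  2 ^ ((1 : ℝ) / 4)

namespace fourthRootTwo

lemma one_lt : 1 < fourthRootTwo :=
  Real.one_lt_rpow one_lt_two (by norm_num)

lemma pow_eq_rpow (n : ℕ) : fourthRootTwo ^ n = (2 : ℝ) ^ ((n : ℝ) / 4) := by
  rw [fourthRootTwo, ← Real.rpow_mul_natCast zero_le_two, one_div_mul_eq_div]

lemma pow_four : fourthRootTwo ^ 4 = 2 := by
  rw [pow_eq_rpow, Nat.cast_ofNat, div_self four_ne_zero, Real.rpow_one]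

lemma pow_lt_two {n : ℕ} (hn : n < 4) : fourthRootTwo ^ n < 2 :=
  (pow_lt_pow_right₀ one_lt hn).trans_eq pow_four

lemma pos : 0 < fourthRootTwo :=
  zero_lt_one.trans one_lt

lemma pow_lt_one_add {n : ℕ} (hn : n < 4) : fourthRootTwo ^ n < 1 + fourthRootTwo := by
  linarith [pow_lt_two hn, one_lt]

lemma cube_lt_one_add_add_sq : fourthRootTwo ^ 3 < 1 + fourthRootTwo + fourthRootTwo ^ 2 :=
  (pow_lt_one_add (by norm_num)).trans (lt_add_of_pos_right _ (pow_pos pos 2))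

end fourthRootTwo

section Sequence

open fourthRootTwo

local notation "τ" => fourthRootTwo

lemma bcfSeq_zero : bcfSeq 0 = (τ, τ ^ 2, τ ^ 3) := by
  rw [bcfSeq, pow_eq_rpow, pow_eq_rpow, fourthRootTwo]
  norm_num

lemma bcfSeq_one :
    bcfSeq 1 = (1 + τ ^ 3 / (1 + τ + τ ^ 2), 1 / (1 + τ + τ ^ 2), (1 + τ) / (1 + τ + τ ^ 2)) := by
  rw [bcfSeq, bcfSeq_zero, bcfStep_pow one_lt pow_four]

lemma bcfSeq_two : bcfSeq 2 = (1 + τ ^ 2 / (1 + τ), τ ^ 3 / (1 + τ), 1 / (1 + τ)) := by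
  rw [bcfSeq, bcfSeq_one, bcfStep_div_one_add_add_sq pos cube_lt_one_add_add_sq]

lemma bcfSeq_three : bcfSeq 3 = (1 + τ, τ ^ 2, τ ^ 3) := by
  rw [bcfSeq, bcfSeq_two,
    bcfStep_div_one_add pos (pow_lt_one_add (by norm_num)) (pow_lt_one_add (by norm_num))]

lemma bcfSeq_four : bcfSeq 4 = bcfSeq 1 := by
  have hshift := bcfStep_intCast_add 1 0 0 τ (τ ^ 2) (τ ^ 3)
  rw [Int.cast_one, Int.cast_zero, zero_add, zero_add] at hshift
  rw [bcfSeq, bcfSeq_three, hshift, ← bcfSeq_zero, ← bcfSeq]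

lemma bcfSeq_succ_periodic : Function.Periodic (fun i ↦ bcfSeq (i + 1)) 3 := by
  intro i
  induction i with
  | zero => exact bcfSeq_four
  | succ i ih => exact congrArg bcfStep ih

lemma bcfIntPart_bcfSeq_zero : bcfIntPart (bcfSeq 0) = (1, 1, 1) := by
  rw [bcfSeq_zero, bcfIntPart_pow one_lt.le (pow_lt_two (by norm_num))]

lemma bcfIntPart_bcfSeq_one : bcfIntPart (bcfSeq 1) = (1, 0, 0) := by
  rw [bcfSeq_one, bcfIntPart_div_one_add_add_sq pos cube_lt_one_add_add_sq]

lemma bcfIntPart_bcfSeq_two : bcfIntPart (bcfSeq 2) = (1, 0, 0) := by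
  rw [bcfSeq_two,
    bcfIntPart_div_one_add pos (pow_lt_one_add (by norm_num)) (pow_lt_one_add (by norm_num))]

lemma bcfIntPart_bcfSeq_three : bcfIntPart (bcfSeq 3) = (2, 1, 1) := by
  rw [bcfSeq_three, bcfIntPart_one_add_pow one_lt.le (pow_lt_two (by norm_num))]

lemma bcfIntPart_bcfSeq_succ (i : ℕ) :
    bcfIntPart (bcfSeq (i + 1)) = if 3 ∣ i + 1 then (2, 1, 1) else (1, 0, 0) := by
  rw [← bcfSeq_succ_periodic.map_mod_nat i]
  obtain h | h | h : i % 3 = 0 ∨ i % 3 = 1 ∨ i % 3 = 2 := by omega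
  · rw [h, bcfIntPart_bcfSeq_one, if_neg (by omega)]
  · rw [h, bcfIntPart_bcfSeq_two, if_neg (by omega)]
  · rw [h, bcfIntPart_bcfSeq_three, if_pos (by omega)]

end Sequence

theorem stmt_14 :
    (⌊(bcfSeq 0).1⌋ = 1 ∧ ⌊(bcfSeq 0).2.1⌋ = 1 ∧ ⌊(bcfSeq 0).2.2⌋ = 1) ∧
    ∀ i : ℕ, 1 ≤ i →
      (⌊(bcfSeq i).1⌋ = if 3 ∣ i then 2 else 1) ∧
      (⌊(bcfSeq i).2.1⌋ = if 3 ∣ i then 1 else 0) ∧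
      (⌊(bcfSeq i).2.2⌋ = if 3 ∣ i then 1 else 0) := by
  refine ⟨bcfIntPart_eq_iff.mp bcfIntPart_bcfSeq_zero, fun i hi ↦ ?_⟩
  obtain ⟨j, rfl⟩ := Nat.exists_eq_add_of_le' hi
  refine bcfIntPart_eq_iff.mp ((bcfIntPart_bcfSeq_succ j).trans ?_)
  split_ifs <;> rfl
end

section
/- Let a₀, b₀, a₁, b₁ be nonnegative integers and let α, β, α', β' be positive real numbers satisfying the period-two bifurcating continued fraction fixed-point system α = a₀ + β'/α', β = b₀ + 1/α', α' = a₁ + β/α, β' = b₁ + 1/α. Then α is algebraic over ℚ of degree at most 3, i.e., there exists a nonzero polynomial p with rational coefficients of degree at most 3 such that p(α) = 0. -/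
/-!
Clearing denominators leaves two equations in `α` and `α'` alone:
`α (α - a₀) α' = b₁ α + 1` and `α' (α' - a₁) α = b₀ α' + 1`. The first is linear in `α'`, and
eliminating `α'` between them gives a cubic equation for `α` with leading coefficient `1 + a₁ b₁`.
-/

open Polynomial

theorem mul_sub_mul_eq_of_bifurcating_step {L : Type*} [Field L] {a b x y z : L} (hx : x ≠ 0)
    (hy : y ≠ 0) (hxy : x = a + z / y) (hz : z = b + 1 / x) : x * (x - a) * y = b * x + 1 := by
  have hzy : (x - a) * y = z := by rw [sub_eq_of_eq_add' hxy, div_mul_cancel₀ z hy]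
  have hzx : x * z = b * x + 1 := by rw [hz, mul_add, mul_one_div_cancel hx, mul_comm]
  rw [mul_assoc, hzy, hzx]

section PeriodTwoCubic

variable {R : Type*} [CommRing R]

/-- The cubic satisfied by the first entry `α` of a period-two bifurcating continued fraction with
parameter pairs `(a₀, b₀)` and `(a₁, b₁)`. It is the numerator obtained by substituting
`α' = (b₁ α + 1) / (α (α - a₀))` into `α' (α' - a₁) α = b₀ α' + 1`, up to sign. -/
noncomputable def periodTwoCubic (a₀ b₀ a₁ b₁ : R) : R[X] :=
  X * (X - C a₀) ^ 2 + (C b₀ + C a₁ * X) * (X - C a₀) * (C b₁ * X + 1) - (C b₁ * X + 1) ^ 2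

theorem degree_periodTwoCubic_le (a₀ b₀ a₁ b₁ : R) : (periodTwoCubic a₀ b₀ a₁ b₁).degree ≤ 3 := by
  unfold periodTwoCubic
  compute_degree

theorem coeff_three_periodTwoCubic (a₀ b₀ a₁ b₁ : R) :
    (periodTwoCubic a₀ b₀ a₁ b₁).coeff 3 = 1 + a₁ * b₁ := by
  unfold periodTwoCubic
  compute_degree!

theorem periodTwoCubic_ne_zero {a₀ b₀ a₁ b₁ : R} (h : 1 + a₁ * b₁ ≠ 0) :
    periodTwoCubic a₀ b₀ a₁ b₁ ≠ 0 := by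
  intro hzero
  rw [← coeff_three_periodTwoCubic a₀ b₀, hzero, coeff_zero] at h
  exact h rfl

theorem aeval_periodTwoCubic_eq_zero {A : Type*} [CommRing A] [Algebra R A] {a₀ b₀ a₁ b₁ : R}
    {x y : A}
    (hx : x * (x - algebraMap R A a₀) * y = algebraMap R A b₁ * x + 1)
    (hy : y * (y - algebraMap R A a₁) * x = algebraMap R A b₀ * y + 1) :
    aeval x (periodTwoCubic a₀ b₀ a₁ b₁) = 0 := by
  simp only [periodTwoCubic, map_sub, map_add, map_mul, map_pow, map_one, aeval_X, aeval_C, ← hx]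
  linear_combination (-x * (x - algebraMap R A a₀) ^ 2) * hy

end PeriodTwoCubic

theorem stmt_15_general {R L : Type*} [CommRing R] [Field L] [Algebra R L] {a₀ b₀ a₁ b₁ : R}
    (h : 1 + a₁ * b₁ ≠ 0) {α β α' β' : L} (hα : α ≠ 0) (hα' : α' ≠ 0)
    (e₁ : α = algebraMap R L a₀ + β' / α') (e₂ : β = algebraMap R L b₀ + 1 / α')
    (e₃ : α' = algebraMap R L a₁ + β / α) (e₄ : β' = algebraMap R L b₁ + 1 / α) :
    ∃ p : R[X], p ≠ 0 ∧ p.degree ≤ 3 ∧ aeval α p = 0 :=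
  ⟨periodTwoCubic a₀ b₀ a₁ b₁, periodTwoCubic_ne_zero h, degree_periodTwoCubic_le a₀ b₀ a₁ b₁,
    aeval_periodTwoCubic_eq_zero (mul_sub_mul_eq_of_bifurcating_step hα hα' e₁ e₄)
      (mul_sub_mul_eq_of_bifurcating_step hα' hα e₃ e₂)⟩

theorem stmt_15 (a₀ b₀ a₁ b₁ : ℕ) (α β α' β' : ℝ)
    (hα : 0 < α) (hβ : 0 < β) (hα' : 0 < α') (hβ' : 0 < β')
    (e₁ : α = a₀ + β' / α') (e₂ : β = b₀ + 1 / α')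
    (e₃ : α' = a₁ + β / α) (e₄ : β' = b₁ + 1 / α) :
    ∃ p : Polynomial ℚ, p ≠ 0 ∧ p.degree ≤ 3 ∧ Polynomial.aeval α p = 0 := by
  rw [← map_natCast (algebraMap ℚ ℝ)] at e₁ e₂ e₃ e₄
  exact stmt_15_general (by positivity) hα.ne' hα'.ne' e₁ e₂ e₃ e₄
end
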